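/- arXiv:1407.6448 — 2 statements merged into one kernel-verified Lean document; each statement's English description precedes it below -/
import Mathlib

section
/- Assume conditions (A), (S), (S)₁ and (K). Then there exist constants C > 0 and c > 0 such that for every r ≥ 0, every ω ∈ S^{n−1}, and every differentiable function û : [0,∞) → ℂᵐ satisfying A⁰û′(t) + i r A(ω) û(t) + L û(t) = 0 for all t ≥ 0, one has |û(t)| ≤ C e^{−c η(r) t} |û(0)| for all t ≥ 0. -/
open Matrix BigOperators Finset

noncomputable section

/-- Complexification of a real matrix. -/
def cmap {a b : ℕ} (X : Matrix (Fin a) (Fin b) ℝ) : Matrix (Fin a) (Fin b) ℂ :=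
  X.map (fun x => (x : ℂ))

/-- Real part of the standard Hermitian inner product `⟨x, y⟩ = ∑ xᵢ conj yᵢ` on `ℂᵐ`. -/
def reIP {m : ℕ} (x y : Fin m → ℂ) : ℝ := (∑ i, x i * (starRingEnd ℂ) (y i)).re

/-- Symmetric part `X₁ = (X + Xᵀ)/2` of a real square matrix. -/
def symP {m : ℕ} (X : Matrix (Fin m) (Fin m) ℝ) : Matrix (Fin m) (Fin m) ℝ :=
  (2⁻¹ : ℝ) • (X + Xᵀ)

/-- Skew-symmetric part `X₂ = (X − Xᵀ)/2` of a real square matrix. -/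
def skewP {m : ℕ} (X : Matrix (Fin m) (Fin m) ℝ) : Matrix (Fin m) (Fin m) ℝ :=
  (2⁻¹ : ℝ) • (X - Xᵀ)

/-- Kernel of (the complexification of) a real matrix, as a subset of `ℂᵐ`. -/
def kerC {m : ℕ} (L : Matrix (Fin m) (Fin m) ℝ) : Set (Fin m → ℂ) :=
  {z | (cmap L).mulVec z = 0}

/-- Euclidean norm on `ℂᵐ`. -/
def cnrm {m : ℕ} (z : Fin m → ℂ) : ℝ := Real.sqrt (∑ i, Complex.normSq (z i))

/-- PSD Cauchy–Schwarz. -/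
lemma aux_psd {E : Type*} [NormedAddCommGroup E] [InnerProductSpace ℝ E]
    (Q : E →L[ℝ] E) (hsym : ∀ x y, inner ℝ (Q x) y = inner ℝ x (Q y))
    (hnn : ∀ x, 0 ≤ inner ℝ (Q x) x) :
    ∃ N > (0:ℝ), ∀ z, ‖Q z‖ ^ 2 ≤ N * inner ℝ (Q z) z := by
  refine ⟨‖Q‖ + 1, by positivity, fun z => ?_⟩
  set N := ‖Q‖ + 1 with hN
  have hNpos : 0 < N := by positivity
  have h := hnn (z - N⁻¹ • Q z)
  have h1 : inner ℝ (Q (z - N⁻¹ • Q z)) (z - N⁻¹ • Q z) =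
      inner ℝ (Q z) z - 2 * N⁻¹ * ‖Q z‖ ^ 2 + N⁻¹ ^ 2 * inner ℝ (Q (Q z)) (Q z) := by
    have e : inner ℝ (Q (Q z)) z = ‖Q z‖ ^ 2 := by
      rw [hsym, real_inner_self_eq_norm_sq]
    have e2 : inner ℝ (Q z) (Q z) = ‖Q z‖ ^ 2 := real_inner_self_eq_norm_sq _
    simp only [map_sub, map_smul, inner_sub_left, inner_sub_right, inner_smul_left,
      inner_smul_right, e, e2]
    simp
    ring
  rw [h1] at h
  have h2 : inner ℝ (Q (Q z)) (Q z) ≤ N * ‖Q z‖ ^ 2 := by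
    calc inner ℝ (Q (Q z)) (Q z) ≤ ‖Q (Q z)‖ * ‖Q z‖ := real_inner_le_norm _ _
      _ ≤ (‖Q‖ * ‖Q z‖) * ‖Q z‖ := by gcongr; exact Q.le_opNorm _
      _ ≤ N * ‖Q z‖ ^ 2 := by
        rw [hN]; nlinarith [sq_nonneg ‖Q z‖]
  have h3 : N⁻¹ ^ 2 * inner ℝ (Q (Q z)) (Q z) ≤ N⁻¹ * ‖Q z‖ ^ 2 := by
    calc _ ≤ N⁻¹ ^ 2 * (N * ‖Q z‖ ^ 2) := by gcongr
      _ = _ := by field_simp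
  have h4 : N⁻¹ * ‖Q z‖ ^ 2 ≤ inner ℝ (Q z) z := by linarith
  calc ‖Q z‖ ^ 2 = N * (N⁻¹ * ‖Q z‖ ^ 2) := by field_simp
    _ ≤ _ := by gcongr

/-- Distance to the kernel. -/
lemma aux_ker {E : Type*} [NormedAddCommGroup E] [InnerProductSpace ℝ E] [FiniteDimensional ℝ E]
    (M : E →L[ℝ] E) : ∃ C > (0:ℝ), ∀ z, ∃ w, M (z - w) = 0 ∧ ‖w‖ ≤ C * ‖M z‖ := by
  have : CompleteSpace E := FiniteDimensional.complete ℝ E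
  have : CompleteSpace (LinearMap.range (M : E →ₗ[ℝ] E)) := FiniteDimensional.complete ℝ _
  let f : E →L[ℝ] LinearMap.range (M : E →ₗ[ℝ] E) :=
    LinearMap.toContinuousLinearMap (M : E →ₗ[ℝ] E).rangeRestrict
  have hf : Function.Surjective f := LinearMap.surjective_rangeRestrict _
  obtain ⟨C, hC, h⟩ := f.exists_preimage_norm_le hf
  refine ⟨C, hC, fun z => ?_⟩
  obtain ⟨w, hw, hle⟩ := h (f z)
  refine ⟨w, ?_, hle⟩
  have := congrArg Subtype.val hw
  have h2 : M w = M z := this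
  rw [map_sub, h2, sub_self]

/-- Combined: a PSD form controls the distance to the kernel. -/
lemma aux_dist {E : Type*} [NormedAddCommGroup E] [InnerProductSpace ℝ E] [FiniteDimensional ℝ E]
    (Q : E →L[ℝ] E) (hsym : ∀ x y, inner ℝ (Q x) y = inner ℝ x (Q y))
    (hnn : ∀ x, 0 ≤ inner ℝ (Q x) x) :
    ∃ C > (0:ℝ), ∀ z, ∃ w, Q (z - w) = 0 ∧ ‖w‖ ≤ C * √(inner ℝ (Q z) z) ∧ ‖w‖ ≤ C * ‖z‖ := by
  obtain ⟨N, hN, h1⟩ := aux_psd Q hsym hnn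
  obtain ⟨C, hC, h2⟩ := aux_ker Q
  refine ⟨C * √N + C * ‖Q‖, by positivity, fun z => ?_⟩
  obtain ⟨w, hw, hle⟩ := h2 z
  refine ⟨w, hw, ?_, ?_⟩
  · have : ‖Q z‖ ≤ √N * √(inner ℝ (Q z) z) := by
      rw [← Real.sqrt_mul hN.le]
      exact Real.le_sqrt_of_sq_le (h1 z)
    calc ‖w‖ ≤ C * (√N * √(inner ℝ (Q z) z)) := hle.trans (by gcongr)
      _ ≤ _ := by
        have : 0 ≤ C * ‖Q‖ * √(inner ℝ (Q z) z) := by positivity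
        nlinarith
  · calc ‖w‖ ≤ C * (‖Q‖ * ‖z‖) := hle.trans (by gcongr; exact Q.le_opNorm _)
      _ ≤ _ := by
        have : 0 ≤ C * √N * ‖z‖ := by positivity
        nlinarith

lemma aux_compact {X : Type*} [TopologicalSpace X] {T : Set X} (hT : IsCompact T)
    (f g : X → ℝ) (hf : Continuous f) (hg : Continuous g) (hg0 : ∀ x, 0 ≤ g x)
    (hpos : ∀ x ∈ T, g x = 0 → 0 < f x) :
    ∃ c > (0:ℝ), ∃ N > (0:ℝ), ∀ x ∈ T, c ≤ f x + N * g x := by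
  have hcov : T ⊆ ⋃ N : ℕ, {x | 0 < f x + (N + 1 : ℝ) * g x} := by
    intro x hx
    rw [Set.mem_iUnion]
    rcases (hg0 x).eq_or_lt with h | h
    · exact ⟨0, by simpa [← h] using hpos x hx h.symm⟩
    · obtain ⟨N, hN⟩ := exists_nat_gt (-f x / g x)
      refine ⟨N, ?_⟩
      rw [div_lt_iff₀ h] at hN
      show 0 < f x + (N + 1 : ℝ) * g x
      nlinarith
  obtain ⟨N, hN⟩ := hT.elim_directed_cover _
    (fun N => isOpen_lt continuous_const (by fun_prop)) hcov
    (directed_of_isDirected_le (fun a b hab x hx => by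
      simp only [Set.mem_ofPred_eq] at hx ⊢
      have : (a:ℝ) ≤ b := by exact_mod_cast hab
      nlinarith [hg0 x, mul_le_mul_of_nonneg_right this (hg0 x)]))
  rcases T.eq_empty_or_nonempty with rfl | hne
  · exact ⟨1, one_pos, 1, one_pos, by simp⟩
  · obtain ⟨x0, hx0, hmin⟩ := hT.exists_isMinOn hne
      (f := fun x => f x + (N + 1 : ℝ) * g x) (by fun_prop)
    exact ⟨_, hN hx0, N + 1, by positivity, fun x hx => hmin hx⟩

lemma aux_bdd {W F : Type*} [TopologicalSpace W] [NormedAddCommGroup F] {Ω : Set W}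
    (hΩ : IsCompact Ω) (b : W → F) (hb : Continuous b) : ∃ B > (0:ℝ), ∀ ω ∈ Ω, ‖b ω‖ ≤ B := by
  obtain ⟨B, hB⟩ := hΩ.exists_bound_of_continuousOn hb.continuousOn
  exact ⟨|B| + 1, by positivity, fun ω h => (hB ω h).trans (by linarith [le_abs_self B])⟩

lemma aux_form {E : Type*} [NormedAddCommGroup E] [InnerProductSpace ℝ E]
    (T : E →L[ℝ] E) (x y : E) : |inner ℝ (T x) y| ≤ ‖T‖ * ‖x‖ * ‖y‖ :=
  (abs_real_inner_le_norm _ _).trans (by gcongr; exact T.le_opNorm _)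

/-- Static estimates. -/
lemma aux_static {E W : Type*} [NormedAddCommGroup E] [InnerProductSpace ℝ E]
    [FiniteDimensional ℝ E] [TopologicalSpace W] {Ω : Set W} (hΩ : IsCompact Ω)
    (l s L1 Q : E →L[ℝ] E) (b k : W → E →L[ℝ] E) (hb : Continuous b) (hk : Continuous k)
    (hL1sym : ∀ x y, inner ℝ (L1 x) y = inner ℝ x (L1 y))
    (hL1 : ∀ x, inner ℝ (L1 x) x = inner ℝ (l x) x)
    (hl : ∀ x, 0 ≤ inner ℝ (l x) x)
    (hQsym : ∀ x y, inner ℝ (Q x) y = inner ℝ x (Q y))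
    (hQ : ∀ x, inner ℝ (Q x) x = inner ℝ (s (l x)) x + inner ℝ (l x) x)
    (hQnn : ∀ x, 0 ≤ inner ℝ (Q x) x)
    (hQker : ∀ x, Q x = 0 → l x = 0)
    (hS1 : ∀ ω ∈ Ω, ∀ x, L1 x = 0 → 0 ≤ inner ℝ (s (b ω x)) x)
    (hK : ∀ ω ∈ Ω, ∀ x, l x = 0 → x ≠ 0 → 0 < inner ℝ (k ω (b ω x)) x) :
    ∃ M > (0:ℝ), ∃ c > (0:ℝ), ∃ N > (0:ℝ), ∀ ω ∈ Ω, ∀ x,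
      -(M * √(inner ℝ (l x) x) * ‖x‖) ≤ inner ℝ (s (b ω x)) x ∧
      -(M * √(inner ℝ (s (l x)) x + inner ℝ (l x) x) * ‖x‖) ≤ inner ℝ (k ω (l x)) x ∧
      c * ‖x‖ ^ 2 - N * (inner ℝ (s (l x)) x + inner ℝ (l x) x) ≤ inner ℝ (k ω (b ω x)) x := by
  have : ProperSpace E := FiniteDimensional.proper ℝ E
  obtain ⟨B, hB, hBb⟩ := aux_bdd hΩ (fun ω => s.comp (b ω)) (by fun_prop)
  obtain ⟨B', hB', hBk⟩ := aux_bdd hΩ (fun ω => (k ω).comp l) (by fun_prop)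
  obtain ⟨C1, hC1, h1⟩ := aux_dist L1 hL1sym (fun x => by rw [hL1]; exact hl x)
  obtain ⟨C2, hC2, h2⟩ := aux_dist Q hQsym hQnn
  obtain ⟨N0, hN0, hpsd⟩ := aux_psd Q hQsym hQnn
  obtain ⟨c, hc, N, hN, h3⟩ := aux_compact (hΩ.prod (isCompact_sphere (0:E) 1))
    (fun p => inner ℝ (k p.1 (b p.1 p.2)) p.2) (fun p => inner ℝ (Q p.2) p.2)
    (by fun_prop) (by fun_prop) (fun p => hQnn _) (by
      rintro ⟨ω, x⟩ ⟨hω, hx⟩ h0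
      have hx0 : x ≠ 0 := by
        rintro rfl
        simp at hx
      refine hK ω hω x (hQker x ?_) hx0
      have := hpsd x
      simp only at h0
      rw [h0, mul_zero] at this
      have h' : ‖Q x‖ = 0 := by nlinarith [norm_nonneg (Q x)]
      simpa using h')
  refine ⟨B * C1 * (2 + C1) + B' * C2, by positivity, c, hc, N, hN, fun ω hω x => ⟨?_, ?_, ?_⟩⟩
  · obtain ⟨w, hw, hw1, hw2⟩ := h1 x
    rw [hL1] at hw1
    have e : inner ℝ (s (b ω x)) x = inner ℝ (s (b ω (x - w))) (x - w)
        + inner ℝ (s (b ω (x - w))) w + inner ℝ (s (b ω w)) x := by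
      simp only [map_sub, inner_sub_left, inner_sub_right]; ring
    have p1 := hS1 ω hω _ hw
    have p2 := (abs_le.1 (aux_form (s.comp (b ω)) (x - w) w)).1
    have p3 := (abs_le.1 (aux_form (s.comp (b ω)) w x)).1
    simp only [ContinuousLinearMap.comp_apply] at p2 p3
    have q1 : ‖x - w‖ ≤ (1 + C1) * ‖x‖ := (norm_sub_le _ _).trans (by linarith)
    have q2 : ‖s.comp (b ω)‖ * ‖x - w‖ * ‖w‖ ≤
        B * ((1 + C1) * ‖x‖) * (C1 * √(inner ℝ (l x) x)) := by
      gcongr; exact hBb ω hω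
    have q3 : ‖s.comp (b ω)‖ * ‖w‖ * ‖x‖ ≤
        B * (C1 * √(inner ℝ (l x) x)) * ‖x‖ := by
      gcongr; exact hBb ω hω
    have q4 : 0 ≤ B' * C2 * √(inner ℝ (l x) x) * ‖x‖ := by positivity
    rw [e]
    nlinarith
  · obtain ⟨w, hw, hw1, hw2⟩ := h2 x
    rw [hQ] at hw1
    have e : l x = l w := by
      have := hQker _ hw
      rw [map_sub, sub_eq_zero] at this
      exact this
    have p3 := (abs_le.1 (aux_form ((k ω).comp l) w x)).1
    simp only [ContinuousLinearMap.comp_apply] at p3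
    rw [← e] at p3
    have q3 : ‖(k ω).comp l‖ * ‖w‖ * ‖x‖ ≤
        B' * (C2 * √(inner ℝ (s (l x)) x + inner ℝ (l x) x)) * ‖x‖ := by
      gcongr; exact hBk ω hω
    have q4 : 0 ≤ B * C1 * (2 + C1) * √(inner ℝ (s (l x)) x + inner ℝ (l x) x) * ‖x‖ := by
      positivity
    nlinarith
  · rcases eq_or_ne x 0 with rfl | hx
    · simp
    have hn : 0 < ‖x‖ := norm_pos_iff.2 hx
    have := h3 (ω, ‖x‖⁻¹ • x) ⟨hω, by simp [norm_smul, hn.ne']⟩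
    simp only [map_smul, inner_smul_left, inner_smul_right] at this
    rw [← hQ]
    simp only [conj_trivial] at this
    have h5 := mul_le_mul_of_nonneg_right this (sq_nonneg ‖x‖)
    have h6 : (‖x‖⁻¹ * (‖x‖⁻¹ * inner ℝ (k ω (b ω x)) x) +
        N * (‖x‖⁻¹ * (‖x‖⁻¹ * inner ℝ (Q x) x))) * ‖x‖ ^ 2
        = inner ℝ (k ω (b ω x)) x + N * inner ℝ (Q x) x := by
      field_simp
    linarith

set_option maxHeartbeats 1000000 in
/-- Scalar inequality. -/
lemma aux_scalar (M c N : ℝ) (hM : 0 < M) (hc : 0 < c) (hN : 0 < N) (a0 : ℝ) (ha0 : 0 < a0) :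
    ∃ a > (0:ℝ), ∃ d > (0:ℝ), a ≤ a0 ∧ d ≤ a0 ∧ ∀ r X Y U sb sl kb kl : ℝ, 0 ≤ r → 0 ≤ X → 0 ≤ U →
      0 ≤ Y → Y = sl + X →
      -(M * √X * U) ≤ sb → -(M * √Y * U) ≤ kl → c * U ^ 2 - N * Y ≤ kb →
      d * c / 2 * (r ^ 2 / (1 + r ^ 2) ^ 2) * U ^ 2 ≤
        X + a / (1 + r ^ 2) * (r * sb + sl) + d * r / (1 + r ^ 2) ^ 2 * (r * kb + kl) := by
  set θ := 1 / (N + M ^ 2 / c + 1) with hθ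
  have hθ0 : 0 < θ := by positivity
  have hθ1 : θ ≤ 1 := by
    rw [hθ, div_le_one (by positivity)]
    have : 0 < M ^ 2 / c := by positivity
    linarith
  set a := min a0 (min (1/2) (θ * c / (2 * M ^ 2))) with ha
  have hapos : 0 < a := by simp only [ha, lt_min_iff]; refine ⟨ha0, by norm_num, by positivity⟩
  have ha1 : a ≤ a0 := min_le_left _ _
  have ha2 : a ≤ 1/2 := (min_le_right _ _).trans (min_le_left _ _)
  have ha3 : a ≤ θ * c / (2 * M ^ 2) := (min_le_right _ _).trans (min_le_right _ _)
  refine ⟨a, hapos, θ * a, by positivity, ha1, by nlinarith, ?_⟩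
  intro r X Y U sb sl kb kl hr hX hU hY hYe h1 h2 h3
  set d := θ * a with hd
  have hdpos : 0 < d := by positivity
  set w := 1 + r ^ 2 with hw
  have hw1 : 1 ≤ w := by nlinarith [sq_nonneg r]
  have hw0 : 0 < w := by linarith
  obtain ⟨x, hx0, hxX⟩ : ∃ x, 0 ≤ x ∧ x = √X := ⟨_, Real.sqrt_nonneg _, rfl⟩
  obtain ⟨y, hy0, hyY⟩ : ∃ x, 0 ≤ x ∧ x = √Y := ⟨_, Real.sqrt_nonneg _, rfl⟩
  have hX2 : X = x ^ 2 := by rw [hxX, Real.sq_sqrt hX]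
  have hY2 : Y = y ^ 2 := by rw [hyY, Real.sq_sqrt hY]
  rw [← hxX] at h1
  rw [← hyY] at h2
  set q := r / w * U with hq
  have hq0 : 0 ≤ q := by positivity
  -- term S
  have t1 : - (a * M * x * q) + a / w * (y ^ 2 - x ^ 2) ≤
      a / w * (r * sb + sl) := by
    have : a / w * (r * (-(M * x * U)) + (y ^ 2 - x ^ 2)) ≤ a / w * (r * sb + sl) := by
      have : sl = y ^ 2 - x ^ 2 := by linarith
      rw [this]; gcongr
    refine le_trans (le_of_eq ?_) this
    rw [hq]; field_simp
  have t2 : d * c * q ^ 2 - d * N * (r ^ 2 / w ^ 2) * y ^ 2 - d * M * (y / w) * q ≤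
      d * r / w ^ 2 * (r * kb + kl) := by
    have : d * r / w ^ 2 * (r * (c * U ^ 2 - N * Y) + (-(M * y * U))) ≤
        d * r / w ^ 2 * (r * kb + kl) := by gcongr
    refine le_trans (le_of_eq ?_) this
    rw [hq, hY2]; field_simp; ring
  have t3 : d * c / 2 * (r ^ 2 / w ^ 2) * U ^ 2 = d * c / 2 * q ^ 2 := by
    rw [hq]; field_simp
  -- Young
  have y1 : a * M * x * q ≤ d * c / 4 * q ^ 2 + a / (θ * c) * M ^ 2 * x ^ 2 := by
    have : 0 ≤ (d * c / 4 * q ^ 2 + a / (θ * c) * M ^ 2 * x ^ 2) - a * M * x * q := by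
      have e : (d * c / 4 * q ^ 2 + a / (θ * c) * M ^ 2 * x ^ 2) - a * M * x * q =
          a / (θ * c) * (θ * c * q / 2 - M * x) ^ 2 := by
        rw [hd]; field_simp; ring
      rw [e]; positivity
    linarith
  have y2 : d * M * (y / w) * q ≤ d * c / 4 * q ^ 2 + d * (M ^ 2 / c) * (y / w) ^ 2 := by
    have e : (d * c / 4 * q ^ 2 + d * (M ^ 2 / c) * (y / w) ^ 2) - d * M * (y / w) * q =
        d / c * (c * q / 2 - M * (y / w)) ^ 2 := by
      field_simp; ring
    have : 0 ≤ d / c * (c * q / 2 - M * (y / w)) ^ 2 := by positivity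
    linarith
  have y3 : (y / w) ^ 2 ≤ y ^ 2 / w := by
    rw [div_pow]; gcongr; nlinarith
  have y4 : (r ^ 2 / w ^ 2) * y ^ 2 ≤ y ^ 2 / w := by
    have : (r ^ 2 / w ^ 2) * y ^ 2 = y ^ 2 / w * (r ^ 2 / w) := by field_simp
    rw [this]
    apply mul_le_of_le_one_right (by positivity)
    rw [div_le_one hw0]; linarith
  have y5 : a / (θ * c) * M ^ 2 ≤ 1 / 2 := by
    calc a / (θ * c) * M ^ 2 ≤ (θ * c / (2 * M ^ 2)) / (θ * c) * M ^ 2 := by gcongr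
      _ = 1 / 2 := by field_simp
  have y6 : d * (N + M ^ 2 / c) ≤ a := by
    have : θ * (N + M ^ 2 / c) ≤ 1 := by
      rw [hθ, one_div, inv_mul_le_one₀ (by positivity)]; linarith
    calc d * (N + M ^ 2 / c) = (θ * (N + M ^ 2 / c)) * a := by rw [hd]; ring
      _ ≤ 1 * a := by gcongr
      _ = a := one_mul a
  have y7 : a / w * x ^ 2 ≤ 1/2 * x ^ 2 := by
    exact mul_le_mul_of_nonneg_right ((div_le_self hapos.le hw1).trans ha2) (sq_nonneg x)
  have y8 : a / (θ * c) * M ^ 2 * x ^ 2 ≤ 1/2 * x ^ 2 := by gcongr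
  have y9 : d * N * ((r ^ 2 / w ^ 2) * y ^ 2) ≤ d * N * (y ^ 2 / w) := by gcongr
  have y10 : d * (M ^ 2 / c) * (y / w) ^ 2 ≤ d * (M ^ 2 / c) * (y ^ 2 / w) := by gcongr
  have y11 : d * (N + M ^ 2 / c) * (y ^ 2 / w) ≤ a * (y ^ 2 / w) := by gcongr
  have y12 : a / w * (y ^ 2 - x ^ 2) = a * (y ^ 2 / w) - a / w * x ^ 2 := by ring
  rw [t3, hX2]
  rw [y12] at t1
  linarith

/-- Gronwall. -/
lemma aux_gronwall (F F' : ℝ → ℝ) (c : ℝ)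
    (hF : ∀ t, 0 ≤ t → HasDerivWithinAt F (F' t) (Set.Ici 0) t)
    (h : ∀ t, 0 ≤ t → F' t ≤ -(c * F t)) (t : ℝ) (ht : 0 ≤ t) :
    F t ≤ Real.exp (-(c * t)) * F 0 := by
  have hG : ∀ t, 0 ≤ t → HasDerivWithinAt (fun t => Real.exp (c * t) * F t)
      (Real.exp (c * t) * c * F t + Real.exp (c * t) * F' t) (Set.Ici 0) t := by
    intro t ht
    have : HasDerivAt (fun t => Real.exp (c * t)) (Real.exp (c * t) * c) t := by
      simpa using ((hasDerivAt_id t).const_mul c).exp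
    exact this.hasDerivWithinAt.mul (hF t ht)
  have hanti : AntitoneOn (fun t => Real.exp (c * t) * F t) (Set.Ici 0) := by
    apply antitoneOn_of_hasDerivWithinAt_nonpos (convex_Ici 0)
      (f' := fun t => Real.exp (c * t) * c * F t + Real.exp (c * t) * F' t)
    · exact fun t ht => (hG t ht).continuousWithinAt
    · intro t ht
      exact (hG t (interior_subset ht)).mono interior_subset
    · intro t ht
      have := h t (interior_subset ht)
      have h2 := Real.exp_pos (c * t)
      nlinarith
  have := hanti (Set.mem_Ici.2 le_rfl) (Set.mem_Ici.2 ht) ht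
  simp only [mul_zero, Real.exp_zero, one_mul] at this
  rw [Real.exp_neg, ← div_eq_inv_mul, le_div_iff₀ (Real.exp_pos _)]
  linarith

lemma aux_deriv {E : Type*} [NormedAddCommGroup E] [InnerProductSpace ℝ E]
    (T : E →L[ℝ] E) (hsym : ∀ x y, inner ℝ (T x) y = inner ℝ x (T y)) (u : ℝ → E) (v : E) (t : ℝ)
    (hu : HasDerivWithinAt u v (Set.Ici 0) t) :
    HasDerivWithinAt (fun t => inner ℝ (T (u t)) (u t)) (2 * inner ℝ (T v) (u t)) (Set.Ici 0) t := by
  have h1 := (T.hasFDerivAt (x := u t)).comp_hasDerivWithinAt t hu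
  have h2 := h1.inner ℝ hu
  refine h2.congr_deriv ?_
  simp only [Function.comp]
  rw [hsym (u t) v, real_inner_comm]; ring

theorem aux_main {E W : Type*} [NormedAddCommGroup E] [InnerProductSpace ℝ E]
    [FiniteDimensional ℝ E] [TopologicalSpace W] {Ω : Set W} (hΩ : IsCompact Ω)
    (a0 l s L1 Q : E →L[ℝ] E) (b k : W → E →L[ℝ] E) (hb : Continuous b) (hk : Continuous k)
    (ha0sym : ∀ x y, inner ℝ (a0 x) y = inner ℝ x (a0 y))
    (ha0pos : ∀ x, x ≠ 0 → 0 < inner ℝ (a0 x) x)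
    (hbskew : ∀ ω ∈ Ω, ∀ x, inner ℝ (b ω x) x = 0)
    (hsa : ∀ x y, inner ℝ (s (a0 x)) y = inner ℝ x (s (a0 y)))
    (hka : ∀ ω ∈ Ω, ∀ x y, inner ℝ (k ω (a0 x)) y = inner ℝ x (k ω (a0 y)))
    (hL1sym : ∀ x y, inner ℝ (L1 x) y = inner ℝ x (L1 y))
    (hL1 : ∀ x, inner ℝ (L1 x) x = inner ℝ (l x) x)
    (hl : ∀ x, 0 ≤ inner ℝ (l x) x)
    (hQsym : ∀ x y, inner ℝ (Q x) y = inner ℝ x (Q y))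
    (hQ : ∀ x, inner ℝ (Q x) x = inner ℝ (s (l x)) x + inner ℝ (l x) x)
    (hQnn : ∀ x, 0 ≤ inner ℝ (Q x) x)
    (hQker : ∀ x, Q x = 0 → l x = 0)
    (hS1 : ∀ ω ∈ Ω, ∀ x, L1 x = 0 → 0 ≤ inner ℝ (s (b ω x)) x)
    (hK : ∀ ω ∈ Ω, ∀ x, l x = 0 → x ≠ 0 → 0 < inner ℝ (k ω (b ω x)) x) :
    ∃ C > (0:ℝ), ∃ c > (0:ℝ), ∀ r : ℝ, 0 ≤ r → ∀ ω ∈ Ω, ∀ u u' : ℝ → E,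
      (∀ t : ℝ, 0 ≤ t → HasDerivWithinAt u (u' t) (Set.Ici 0) t) →
      (∀ t : ℝ, 0 ≤ t → a0 (u' t) + r • b ω (u t) + l (u t) = 0) →
      ∀ t : ℝ, 0 ≤ t →
        ‖u t‖ ≤ C * Real.exp (-(c * (r ^ 2 / (1 + r ^ 2) ^ 2) * t)) * ‖u 0‖ := by
  have : ProperSpace E := FiniteDimensional.proper ℝ E
  obtain ⟨M, hM, c, hc, N, hN, hst⟩ := aux_static hΩ l s L1 Q b k hb hk hL1sym hL1 hl hQsym hQ
    hQnn hQker hS1 hK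
  obtain ⟨Bk, hBk, hBk'⟩ := aux_bdd hΩ (fun ω => (k ω).comp a0) (by fun_prop)
  obtain ⟨α, hα, hαpos⟩ : ∃ α > (0:ℝ), ∀ x, α * ‖x‖ ^ 2 ≤ inner ℝ (a0 x) x := by
    obtain ⟨α, hα, N, hN, h3⟩ := aux_compact (isCompact_sphere (0:E) 1)
      (fun p => inner ℝ (a0 p) p) (fun p => 0)
      (by fun_prop) (by fun_prop) (fun p => le_rfl) (by
        intro x hx _
        apply ha0pos
        rintro rfl
        simp at hx)
    refine ⟨α, hα, fun x => ?_⟩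
    rcases eq_or_ne x 0 with rfl | hx
    · simp
    have hn : 0 < ‖x‖ := norm_pos_iff.2 hx
    have := h3 (‖x‖⁻¹ • x) (by simp [norm_smul, hn.ne'])
    simp only [map_smul, inner_smul_left, inner_smul_right, conj_trivial, mul_zero, add_zero] at this
    have h5 := mul_le_mul_of_nonneg_right this (sq_nonneg ‖x‖)
    have h6 : (‖x‖⁻¹ * (‖x‖⁻¹ * inner ℝ (a0 x) x)) * ‖x‖ ^ 2 = inner ℝ (a0 x) x := by
      field_simp
    linarith
  set Bs := ‖s.comp a0‖ with hBs
  have hBs0 : 0 ≤ Bs := norm_nonneg _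
  obtain ⟨a, ha, d, hd, haa, hda, hsc⟩ := aux_scalar M c N hM hc hN (α / (2 * (Bs + Bk)))
    (by positivity)
  set c2 := ‖a0‖ + α / 2 with hc2
  have hc20 : 0 < c2 := by positivity
  refine ⟨√(2 * c2 / α), by positivity, d * c / c2 / 2, by positivity, ?_⟩
  intro r hr ω hω u u' hu heq t ht
  set w := 1 + r ^ 2 with hw
  have hw1 : 1 ≤ w := by nlinarith [sq_nonneg r]
  have hw0 : 0 < w := by linarith
  set F : ℝ → ℝ := fun t => inner ℝ (a0 (u t)) (u t) + a / w * inner ℝ (s (a0 (u t))) (u t)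
    + d * r / w ^ 2 * inner ℝ (k ω (a0 (u t))) (u t) with hF
  set F' : ℝ → ℝ := fun t => 2 * inner ℝ (a0 (u' t)) (u t)
    + a / w * (2 * inner ℝ (s (a0 (u' t))) (u t))
    + d * r / w ^ 2 * (2 * inner ℝ (k ω (a0 (u' t))) (u t)) with hF'
  have hder : ∀ t, 0 ≤ t → HasDerivWithinAt F (F' t) (Set.Ici 0) t := by
    intro t ht
    have d1 := aux_deriv a0 ha0sym u (u' t) t (hu t ht)
    have d2 := aux_deriv (s.comp a0) (by simpa using hsa) u (u' t) t (hu t ht)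
    have d3 := aux_deriv ((k ω).comp a0) (by simpa using hka ω hω) u (u' t) t (hu t ht)
    exact (d1.add (d2.const_mul _)).add (d3.const_mul _)
  have hpert : ∀ x : E, |a / w * inner ℝ (s (a0 x)) x + d * r / w ^ 2 * inner ℝ (k ω (a0 x)) x|
      ≤ α / 2 * ‖x‖ ^ 2 := by
    intro x
    have p1 := aux_form (s.comp a0) x x
    have p2 := aux_form ((k ω).comp a0) x x
    simp only [ContinuousLinearMap.comp_apply] at p1 p2
    have p3 : ‖(k ω).comp a0‖ * ‖x‖ * ‖x‖ ≤ Bk * ‖x‖ * ‖x‖ := by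
      gcongr; exact hBk' ω hω
    have e0 : 0 ≤ α / (2 * (Bs + Bk)) := by positivity
    have w1 : a / w ≤ α / (2 * (Bs + Bk)) := (div_le_self ha.le hw1).trans haa
    have w2 : d * r / w ^ 2 ≤ α / (2 * (Bs + Bk)) := by
      refine le_trans ?_ hda
      rw [div_le_iff₀ (by positivity)]
      have : r ≤ w ^ 2 := by nlinarith [sq_nonneg (r - 1)]
      gcongr
    calc _ ≤ |a / w * inner ℝ (s (a0 x)) x| + |d * r / w ^ 2 * inner ℝ (k ω (a0 x)) x| :=
          abs_add_le _ _
      _ = a / w * |inner ℝ (s (a0 x)) x| + d * r / w ^ 2 * |inner ℝ (k ω (a0 x)) x| := by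
          rw [abs_mul, abs_mul, abs_of_nonneg (by positivity : 0 ≤ a / w),
            abs_of_nonneg (by positivity : 0 ≤ d * r / w ^ 2)]
      _ ≤ α / (2 * (Bs + Bk)) * (Bs * ‖x‖ * ‖x‖) + α / (2 * (Bs + Bk)) * (Bk * ‖x‖ * ‖x‖) := by
          gcongr
          exact p2.trans p3
      _ = α / 2 * ‖x‖ ^ 2 := by field_simp
  have hlow : ∀ t, α / 2 * ‖u t‖ ^ 2 ≤ F t := by
    intro t
    have h1 := (abs_le.1 (hpert (u t))).1
    have h2 := hαpos (u t)
    simp only [hF]; linarith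
  have hup : ∀ t, F t ≤ c2 * ‖u t‖ ^ 2 := by
    intro t
    have h1 := (abs_le.1 (hpert (u t))).2
    have h2 := (abs_le.1 (aux_form a0 (u t) (u t))).2
    simp only [hF, hc2]; nlinarith
  have hmain : ∀ t, 0 ≤ t → F' t ≤ -(d * c / c2 * (r ^ 2 / w ^ 2) * F t) := by
    intro t ht
    have e : a0 (u' t) = -(r • b ω (u t)) - l (u t) := by
      have := heq t ht
      rw [add_assoc] at this
      rw [eq_neg_of_add_eq_zero_left this]; abel
    obtain ⟨s1, s2, s3⟩ := hst ω hω (u t)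
    have key := hsc r (inner ℝ (l (u t)) (u t)) (inner ℝ (s (l (u t))) (u t) + inner ℝ (l (u t)) (u t))
      ‖u t‖ (inner ℝ (s (b ω (u t))) (u t)) (inner ℝ (s (l (u t))) (u t))
      (inner ℝ (k ω (b ω (u t))) (u t)) (inner ℝ (k ω (l (u t))) (u t)) hr (hl _) (norm_nonneg _)
      (by rw [← hQ]; exact hQnn _) rfl s1 s2 s3
    have e2 : F' t = -2 * (inner ℝ (l (u t)) (u t) + a / w * (r * inner ℝ (s (b ω (u t))) (u t)
        + inner ℝ (s (l (u t))) (u t)) + d * r / w ^ 2 * (r * inner ℝ (k ω (b ω (u t))) (u t)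
        + inner ℝ (k ω (l (u t))) (u t))) := by
      simp only [hF', e, map_sub, map_neg, map_smul, inner_sub_left, inner_neg_left,
        inner_smul_left, conj_trivial, hbskew ω hω]
      ring
    have e3 : d * c / c2 * (r ^ 2 / w ^ 2) * F t ≤ d * c / c2 * (r ^ 2 / w ^ 2) * (c2 * ‖u t‖ ^ 2) := by
      gcongr; exact hup t
    have e4 : d * c / c2 * (r ^ 2 / w ^ 2) * (c2 * ‖u t‖ ^ 2) =
        2 * (d * c / 2 * (r ^ 2 / w ^ 2) * ‖u t‖ ^ 2) := by field_simp
    rw [e2]; linarith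
  have hg := aux_gronwall F F' _ hder hmain t ht
  have hfin : ‖u t‖ ^ 2 ≤ (√(2 * c2 / α) *
      Real.exp (-(d * c / c2 / 2 * (r ^ 2 / w ^ 2) * t)) * ‖u 0‖) ^ 2 := by
    rw [mul_pow, mul_pow, Real.sq_sqrt (by positivity), ← Real.exp_nat_mul]
    have e5 : ((2:ℕ):ℝ) * -(d * c / c2 / 2 * (r ^ 2 / w ^ 2) * t) =
        -(d * c / c2 * (r ^ 2 / w ^ 2) * t) := by push_cast; ring
    rw [e5]
    have h1 : α / 2 * ‖u t‖ ^ 2 ≤ Real.exp (-(d * c / c2 * (r ^ 2 / w ^ 2) * t)) * (c2 * ‖u 0‖ ^ 2) :=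
      (hlow t).trans (hg.trans (by gcongr; exact hup 0))
    have h2 : ‖u t‖ ^ 2 = 2 / α * (α / 2 * ‖u t‖ ^ 2) := by field_simp
    rw [h2]
    calc _ ≤ 2 / α * (Real.exp (-(d * c / c2 * (r ^ 2 / w ^ 2) * t)) * (c2 * ‖u 0‖ ^ 2)) := by
          gcongr
      _ = _ := by ring
  exact le_of_sq_le_sq hfin (by positivity)

abbrev ES (m : ℕ) := EuclideanSpace ℂ (Fin m)

/-- operator of a complex matrix, viewed as real-linear -/
def opL {m : ℕ} : Matrix (Fin m) (Fin m) ℂ →ₗ[ℝ] (ES m →L[ℝ] ES m) where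
  toFun X := (Matrix.toEuclideanCLM (𝕜 := ℂ) X).restrictScalars ℝ
  map_add' X Y := by ext; simp
  map_smul' c X := by
    ext z i
    simp [Matrix.smul_mulVec]

lemma opL_apply {m : ℕ} (X : Matrix (Fin m) (Fin m) ℂ) (z : ES m) :
    (opL X z).ofLp = X.mulVec z.ofLp := by
  simp [opL]

lemma inner_ES {m : ℕ} (x y : ES m) : inner ℝ x y = reIP x.ofLp y.ofLp := by
  rw [real_inner_comm]
  simp [reIP, PiLp.inner_apply, Complex.inner]

lemma norm_ES {m : ℕ} (x : ES m) : ‖x‖ = cnrm x.ofLp := by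
  simp [cnrm, EuclideanSpace.norm_eq, Complex.normSq_eq_norm_sq]

lemma cmap_mul {m : ℕ} (X Y : Matrix (Fin m) (Fin m) ℝ) : cmap (X * Y) = cmap X * cmap Y := by
  ext i j; simp [cmap, Matrix.mul_apply]

lemma reIP_eq {m : ℕ} (x y : Fin m → ℂ) : reIP x y = (x ⬝ᵥ star y).re := by
  simp [reIP, dotProduct]

lemma reIP_adj {m : ℕ} (X : Matrix (Fin m) (Fin m) ℂ) (x y : Fin m → ℂ) :
    reIP (X.mulVec x) y = reIP x (Xᴴ.mulVec y) := by
  rw [reIP_eq, reIP_eq, Matrix.star_mulVec, Matrix.conjTranspose_conjTranspose,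
    dotProduct_comm, Matrix.dotProduct_mulVec, dotProduct_comm]

lemma reIP_symm {m : ℕ} (x y : Fin m → ℂ) : reIP x y = reIP y x := by
  have := real_inner_comm (WithLp.toLp 2 x : ES m) (WithLp.toLp 2 y)
  rw [inner_ES, inner_ES] at this
  exact this.symm

lemma cmap_conj {m : ℕ} (X : Matrix (Fin m) (Fin m) ℝ) : (cmap X)ᴴ = cmap Xᵀ := by
  ext i j; simp [cmap]

lemma reIP_symP {m : ℕ} (X : Matrix (Fin m) (Fin m) ℝ) (z : Fin m → ℂ) :
    reIP ((cmap (symP X)).mulVec z) z = reIP ((cmap X).mulVec z) z := by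
  have h1 : reIP ((cmap Xᵀ).mulVec z) z = reIP ((cmap X).mulVec z) z := by
    rw [← cmap_conj, reIP_symm, ← reIP_adj]
  have h2 : cmap (symP X) = (2⁻¹:ℝ) • (cmap X + cmap Xᵀ) := by
    ext i j; simp [cmap, symP]
  have h3 : reIP ((cmap (symP X)).mulVec z) z =
      2⁻¹ * (reIP ((cmap X).mulVec z) z + reIP ((cmap Xᵀ).mulVec z) z) := by
    simp only [reIP_eq, h2, Matrix.smul_mulVec, Matrix.add_mulVec, smul_dotProduct, add_dotProduct]
    simp [mul_add]
  rw [h3, h1]; ring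

lemma reIP_skewP {m : ℕ} (X : Matrix (Fin m) (Fin m) ℝ) (z : Fin m → ℂ) :
    reIP ((Complex.I • cmap (skewP X)).mulVec z) z = reIP ((Complex.I • cmap X).mulVec z) z := by
  have h1 : reIP ((Complex.I • cmap Xᵀ).mulVec z) z = - reIP ((Complex.I • cmap X).mulVec z) z := by
    have e : (Complex.I • cmap Xᵀ) = -(Complex.I • cmap X)ᴴ := by
      rw [Matrix.conjTranspose_smul, cmap_conj]; simp
    rw [e, Matrix.neg_mulVec, reIP_symm _ z, reIP_adj (Complex.I • cmap X)]
    simp [reIP_eq]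
  have h2 : Complex.I • cmap (skewP X) = (2⁻¹:ℝ) • (Complex.I • cmap X - Complex.I • cmap Xᵀ) := by
    ext i j; simp [cmap, skewP]; ring
  have h3 : reIP ((Complex.I • cmap (skewP X)).mulVec z) z =
      2⁻¹ * (reIP ((Complex.I • cmap X).mulVec z) z - reIP ((Complex.I • cmap Xᵀ).mulVec z) z) := by
    simp only [reIP_eq, h2, Matrix.smul_mulVec, Matrix.sub_mulVec, smul_dotProduct, sub_dotProduct]
    simp
  rw [h3, h1]; ring

lemma opL_mul {m : ℕ} (X Y : Matrix (Fin m) (Fin m) ℂ) (z : ES m) :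
    opL X (opL Y z) = opL (X * Y) z := by
  apply WithLp.ofLp_injective 2
  simp only [opL_apply, Matrix.mulVec_mulVec]

lemma opL_herm {m : ℕ} (X : Matrix (Fin m) (Fin m) ℂ) (h : Xᴴ = X) (x y : ES m) :
    inner ℝ (opL X x) y = inner ℝ x (opL X y) := by
  rw [inner_ES, inner_ES, opL_apply, opL_apply, reIP_adj, h]

lemma symP_T {m : ℕ} (X : Matrix (Fin m) (Fin m) ℝ) : (symP X)ᵀ = symP X := by
  simp [symP, add_comm]

lemma aux_sphere (n : ℕ) : IsCompact {ω : Fin n → ℝ | ∑ j, ω j ^ 2 = 1} := by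
  apply Metric.isCompact_of_isClosed_isBounded
  · exact isClosed_eq (by fun_prop) continuous_const
  · refine (Metric.isBounded_closedBall (x := (0 : Fin n → ℝ)) (r := 1)).subset ?_
    intro ω hω
    rw [mem_closedBall_zero_iff, pi_norm_le_iff_of_nonneg zero_le_one]
    intro i
    have h1 : ω i ^ 2 ≤ ∑ j, ω j ^ 2 :=
      Finset.single_le_sum (f := fun j => ω j ^ 2) (fun j _ => sq_nonneg _) (Finset.mem_univ i)
    have h2 : ∑ j, ω j ^ 2 = 1 := hω
    rw [h2] at h1
    rw [Real.norm_eq_abs]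
    exact (sq_le_one_iff_abs_le_one _).1 h1

/-- **Theorem 2.1 (decay property of the regularity-loss type, pointwise estimate).**
Under conditions (A), (S), (S)₁ and (K), solutions of `A⁰û′ + i r A(ω) û + L û = 0` satisfy
`|û(t)| ≤ C e^{−c η(r) t} |û(0)|` with `η(r) = r²/(1+r²)²`. -/
theorem decay_regularity_loss_pointwise
    (m n : ℕ) (hm : 1 ≤ m) (hn : 1 ≤ n)
    (A0 : Matrix (Fin m) (Fin m) ℝ) (A : Fin n → Matrix (Fin m) (Fin m) ℝ)
    (L : Matrix (Fin m) (Fin m) ℝ)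
    -- condition (A)
    (hA0sym : A0ᵀ = A0) (hAsym : ∀ j, (A j)ᵀ = A j)
    (hA0pos : ∀ z : Fin m → ℂ, z ≠ 0 → 0 < reIP ((cmap A0).mulVec z) z)
    (hLnn : ∀ z : Fin m → ℂ, 0 ≤ reIP ((cmap L).mulVec z) z)
    (hLker : ∃ z : Fin m → ℂ, z ≠ 0 ∧ z ∈ kerC L)
    -- condition (S)
    (S : Matrix (Fin m) (Fin m) ℝ)
    (hSA0 : (S * A0)ᵀ = S * A0)
    (hSLnn : ∀ z : Fin m → ℂ, 0 ≤ reIP ((cmap (symP (S * L) + symP L)).mulVec z) z)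
    (hSLker : kerC (symP (S * L) + symP L) = kerC L)
    -- condition (S)₁ : `i(SA(ω))₂ ≥ 0` on `Ker(L₁)`
    (hS1 : ∀ ω : Fin n → ℝ, (∑ j, ω j ^ 2 = 1) → ∀ z ∈ kerC (symP L),
      0 ≤ reIP ((Complex.I • cmap (skewP (S * (∑ j, ω j • A j)))).mulVec z) z)
    -- condition (K): a smooth compensating matrix family
    (K : (Fin n → ℝ) → Matrix (Fin m) (Fin m) ℝ)
    (hKsmooth : ∀ i j, ContDiff ℝ (⊤ : ℕ∞) (fun ω => K ω i j))
    (hKodd : ∀ ω : Fin n → ℝ, (∑ j, ω j ^ 2 = 1) → K (-ω) = - K ω)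
    (hKA0 : ∀ ω : Fin n → ℝ, (∑ j, ω j ^ 2 = 1) → (K ω * A0)ᵀ = -(K ω * A0))
    (hKpos : ∀ ω : Fin n → ℝ, (∑ j, ω j ^ 2 = 1) → ∀ z ∈ kerC L, z ≠ 0 →
      0 < reIP ((cmap (symP (K ω * (∑ j, ω j • A j)))).mulVec z) z) :
    ∃ C > (0:ℝ), ∃ c > (0:ℝ), ∀ r : ℝ, 0 ≤ r → ∀ ω : Fin n → ℝ, (∑ j, ω j ^ 2 = 1) →
      ∀ u u' : ℝ → (Fin m → ℂ),
      (∀ t : ℝ, 0 ≤ t → HasDerivWithinAt u (u' t) (Set.Ici 0) t) →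
      (∀ t : ℝ, 0 ≤ t →
        (cmap A0).mulVec (u' t)
          + ((r : ℂ) * Complex.I) • (cmap (∑ j, ω j • A j)).mulVec (u t)
          + (cmap L).mulVec (u t) = 0) →
      ∀ t : ℝ, 0 ≤ t →
        cnrm (u t) ≤ C * Real.exp (-(c * (r ^ 2 / (1 + r ^ 2) ^ 2) * t)) * cnrm (u 0) := by
  have hAω : ∀ ω : Fin n → ℝ, (∑ j, ω j • A j)ᵀ = ∑ j, ω j • A j := by
    intro ω
    rw [Matrix.transpose_sum]
    simp [Matrix.transpose_smul, hAsym]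
  have hopc : Continuous (opL (m := m)) := LinearMap.continuous_of_finiteDimensional _
  have hcm : ∀ f : (Fin n → ℝ) → Matrix (Fin m) (Fin m) ℝ, (∀ i j, Continuous fun ω => f ω i j) →
      Continuous fun ω => cmap (f ω) := by
    intro f hf
    refine continuous_matrix fun i j => ?_
    exact Complex.continuous_ofReal.comp (hf i j)
  have hcs : ∀ (z : ℂ) (f : (Fin n → ℝ) → Matrix (Fin m) (Fin m) ℂ), Continuous f →
      Continuous fun ω => z • f ω := by
    intro z f hf
    exact continuous_matrix fun i j => (hf.matrix_elem i j).const_smul z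
  have hbc : Continuous fun ω : Fin n → ℝ => opL (Complex.I • cmap (∑ j, ω j • A j)) := by
    refine hopc.comp (hcs _ _ (hcm _ ?_))
    intro i j
    simp only [Matrix.sum_apply, Matrix.smul_apply]
    fun_prop
  have hkc : Continuous fun ω : Fin n → ℝ => opL (-Complex.I • cmap (K ω)) :=
    hopc.comp (hcs _ _ (hcm _ fun i j => (hKsmooth i j).continuous))
  have hI : ∀ X : Matrix (Fin m) (Fin m) ℝ, Xᵀ = -X → (-Complex.I • cmap X)ᴴ = -Complex.I • cmap X := by
    intro X hX
    rw [Matrix.conjTranspose_smul, cmap_conj, hX]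
    ext i j; simp [cmap]
  have hH : ∀ X : Matrix (Fin m) (Fin m) ℝ, Xᵀ = X → (cmap X)ᴴ = cmap X := by
    intro X hX
    rw [cmap_conj, hX]
  have hker : ∀ (X : Matrix (Fin m) (Fin m) ℝ) (x : ES m), opL (cmap X) x = 0 ↔ x.ofLp ∈ kerC X := by
    intro X x
    rw [← (WithLp.ofLp_injective 2).eq_iff, opL_apply]
    rfl
  obtain ⟨C, hC, c, hc, hmain⟩ := aux_main (E := ES m) (aux_sphere n)
    (opL (cmap A0)) (opL (cmap L)) (opL (cmap S)) (opL (cmap (symP L)))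
    (opL (cmap (symP (S * L) + symP L)))
    (fun ω => opL (Complex.I • cmap (∑ j, ω j • A j))) (fun ω => opL (-Complex.I • cmap (K ω)))
    hbc hkc
    (opL_herm _ (hH _ hA0sym))
    (by
      intro x hx
      rw [inner_ES, opL_apply]
      exact hA0pos _ (by simpa using hx))
    (by
      intro ω _ x
      rw [inner_ES, opL_apply, ← reIP_skewP]
      have : skewP (∑ j, ω j • A j) = 0 := by simp only [skewP, hAω, sub_self, smul_zero]
      rw [this]
      simp [cmap, reIP])
    (by
      intro x y
      rw [opL_mul, opL_mul, ← cmap_mul]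
      exact opL_herm _ (hH _ hSA0) x y)
    (by
      intro ω hω x y
      rw [opL_mul, opL_mul, Matrix.smul_mul, ← cmap_mul]
      exact opL_herm _ (hI _ (hKA0 ω hω)) x y)
    (opL_herm _ (hH _ (symP_T L)))
    (by
      intro x
      rw [inner_ES, inner_ES, opL_apply, opL_apply, reIP_symP])
    (by
      intro x
      rw [inner_ES, opL_apply]
      exact hLnn _)
    (opL_herm _ (hH _ (by rw [Matrix.transpose_add, symP_T, symP_T])))
    (by
      intro x
      have e : cmap (symP (S * L) + symP L) = cmap (symP (S * L)) + cmap (symP L) := by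
        ext i j; simp [cmap]
      rw [opL_mul, ← cmap_mul, e, map_add, ContinuousLinearMap.add_apply, inner_add_left]
      simp only [inner_ES, opL_apply, reIP_symP])
    (by
      intro x
      rw [inner_ES, opL_apply]
      exact hSLnn _)
    (by
      intro x
      rw [hker, hker, hSLker]
      exact id)
    (by
      intro ω hω x hx
      rw [hker] at hx
      rw [opL_mul, Matrix.mul_smul, ← cmap_mul, inner_ES, opL_apply, ← reIP_skewP]
      exact hS1 ω hω _ hx)
    (by
      intro ω hω x hx hx0
      rw [hker] at hx
      have e : (-Complex.I • cmap (K ω)) * (Complex.I • cmap (∑ j, ω j • A j)) =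
          cmap (K ω * ∑ j, ω j • A j) := by
        rw [cmap_mul, Matrix.smul_mul, Matrix.mul_smul, smul_smul]
        simp
      rw [opL_mul, e, inner_ES, opL_apply, ← reIP_symP]
      exact hKpos ω hω _ hx (by simpa using hx0))
  refine ⟨C, hC, c, hc, ?_⟩
  intro r hr ω hω u u' hu heq t ht
  have := hmain r hr ω hω (fun t => WithLp.toLp 2 (u t)) (fun t => WithLp.toLp 2 (u' t))
    (by
      intro t ht
      exact ((PiLp.continuousLinearEquiv 2 ℝ (fun _ : Fin m => ℂ)).symm.hasFDerivAt).comp_hasDerivWithinAt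
        t (hu t ht))
    (by
      intro t ht
      apply WithLp.ofLp_injective 2
      have h := heq t ht
      rw [WithLp.ofLp_add, WithLp.ofLp_add, WithLp.ofLp_smul, opL_apply, opL_apply, opL_apply,
        Matrix.smul_mulVec]
      rw [WithLp.ofLp_zero, ← h, mul_smul]
      rfl)
    t ht
  rw [norm_ES, norm_ES] at this
  exact this
end
end

section
/- Let L be a real symmetric m×m matrix with L ≥ 0 on ℂᵐ, and let M be a real symmetric m×m matrix. Then M > 0 on Ker(L) if and only if there exists α > 0 such that αM + L > 0 on ℂᵐ. -/
open Matrix BigOperators Finset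

noncomputable section

lemma reIP_eq_s5 {m : ℕ} (X : Matrix (Fin m) (Fin m) ℝ) (z w : Fin m → ℂ) :
    reIP ((cmap X).mulVec z) w =
      ∑ i, ∑ j, X i j * ((z j).re * (w i).re + (z j).im * (w i).im) := by
  unfold reIP cmap
  simp only [Matrix.mulVec, dotProduct, Matrix.map_apply, Complex.re_sum, Finset.sum_mul]
  refine Finset.sum_congr rfl fun i _ => Finset.sum_congr rfl fun j _ => ?_
  simp [Complex.mul_re, Complex.mul_im]
  ring

lemma reIP_symm_s5 {m : ℕ} (X : Matrix (Fin m) (Fin m) ℝ) (hX : Xᵀ = X) (z w : Fin m → ℂ) :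
    reIP ((cmap X).mulVec z) w = reIP ((cmap X).mulVec w) z := by
  rw [reIP_eq_s5, reIP_eq_s5, Finset.sum_comm]
  refine Finset.sum_congr rfl fun i _ => Finset.sum_congr rfl fun j _ => ?_
  have : X j i = X i j := congrFun (congrFun hX i) j
  rw [this]; ring

lemma reIP_add_l {m : ℕ} (x y w : Fin m → ℂ) : reIP (x + y) w = reIP x w + reIP y w := by
  simp only [reIP, Pi.add_apply, add_mul, Finset.sum_add_distrib, Complex.add_re]

lemma reIP_add_r {m : ℕ} (x y w : Fin m → ℂ) : reIP w (x + y) = reIP w x + reIP w y := by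
  simp only [reIP, Pi.add_apply, map_add, mul_add, Finset.sum_add_distrib, Complex.add_re]

lemma reIP_smul_l {m : ℕ} (t : ℝ) (x w : Fin m → ℂ) :
    reIP ((t : ℂ) • x) w = t * reIP x w := by
  simp only [reIP, Pi.smul_apply, smul_eq_mul, mul_assoc, ← Finset.mul_sum, Complex.re_ofReal_mul]

lemma reIP_smul_r {m : ℕ} (t : ℝ) (x w : Fin m → ℂ) :
    reIP w ((t : ℂ) • x) = t * reIP w x := by
  simp only [reIP, Pi.smul_apply, smul_eq_mul, map_mul, Complex.conj_ofReal, mul_left_comm _ (t : ℂ),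
    ← Finset.mul_sum, Complex.re_ofReal_mul]

lemma reIP_self_zero {m : ℕ} (x : Fin m → ℂ) (h : reIP x x = 0) : x = 0 := by
  simp only [reIP, Complex.mul_conj, Complex.re_sum, Complex.ofReal_re] at h
  rw [Finset.sum_eq_zero_iff_of_nonneg (fun i _ => Complex.normSq_nonneg _)] at h
  funext i
  exact Complex.normSq_eq_zero.1 (h i (Finset.mem_univ i))

lemma ker_of_zero {m : ℕ} (L : Matrix (Fin m) (Fin m) ℝ) (hLsym : Lᵀ = L)
    (hLnn : ∀ z : Fin m → ℂ, 0 ≤ reIP ((cmap L).mulVec z) z) (z : Fin m → ℂ)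
    (hz : reIP ((cmap L).mulVec z) z = 0) : (cmap L).mulVec z = 0 := by
  apply reIP_self_zero
  set w := (cmap L).mulVec z with hw
  have key : ∀ t : ℝ, 0 ≤ reIP ((cmap L).mulVec w) w * (t * t) + (2 * reIP w w) * t + 0 := by
    intro t
    have h := hLnn (z + (t : ℂ) • w)
    rw [Matrix.mulVec_add, Matrix.mulVec_smul, reIP_add_l, reIP_add_r, reIP_add_r,
      reIP_smul_l, reIP_smul_l, reIP_smul_r, reIP_smul_r, reIP_symm_s5 L hLsym w z, ← hw, hz] at h
    linarith
  have := discrim_le_zero key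
  unfold discrim at this
  nlinarith [sq_nonneg (reIP w w)]

lemma reIP_cont {m : ℕ} (X : Matrix (Fin m) (Fin m) ℝ) :
    Continuous fun z : Fin m → ℂ => reIP ((cmap X).mulVec z) z := by
  simp only [reIP_eq_s5]
  fun_prop

lemma reIP_comb {m : ℕ} (a : ℝ) (L M : Matrix (Fin m) (Fin m) ℝ) (z : Fin m → ℂ) :
    reIP ((cmap (a • M + L)).mulVec z) z =
      a * reIP ((cmap M).mulVec z) z + reIP ((cmap L).mulVec z) z := by
  simp only [reIP_eq_s5, Finset.mul_sum, ← Finset.sum_add_distrib]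
  refine Finset.sum_congr rfl fun i _ => Finset.sum_congr rfl fun j _ => ?_
  simp; ring

/-- **Remark 1.** For real symmetric `L ≥ 0` and real symmetric `M`:
`M > 0` on `Ker(L)` iff `αM + L > 0` on `ℂᵐ` for some `α > 0`. -/
theorem positivity_on_kernel_iff_global
    (m : ℕ) (hm : 1 ≤ m)
    (L M : Matrix (Fin m) (Fin m) ℝ)
    (hLsym : Lᵀ = L)
    (hLnn : ∀ z : Fin m → ℂ, 0 ≤ reIP ((cmap L).mulVec z) z)
    (hMsym : Mᵀ = M) :
    (∀ z ∈ kerC L, z ≠ 0 → 0 < reIP ((cmap M).mulVec z) z) ↔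
      (∃ α > (0:ℝ), ∀ z : Fin m → ℂ, z ≠ 0 →
        0 < reIP ((cmap (α • M + L)).mulVec z) z) := by
  constructor
  · intro h
    have hcov := (isCompact_sphere (0 : Fin m → ℂ) 1).elim_directed_cover
      (fun n : ℕ => {z | 0 < reIP ((cmap M).mulVec z) z + n * reIP ((cmap L).mulVec z) z})
      (fun n => isOpen_lt continuous_const
        ((reIP_cont M).add (continuous_const.mul (reIP_cont L)))) ?_ ?_
    · obtain ⟨n, hn⟩ := hcov
      refine ⟨1 / ((n : ℝ) + 1), by positivity, fun z hz => ?_⟩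
      have hz' : 0 < ‖z‖ := norm_pos_iff.2 hz
      have hs : ((‖z‖⁻¹ : ℝ) : ℂ) • z ∈ Metric.sphere (0 : Fin m → ℂ) 1 := by
        simp [norm_smul, hz'.ne']
      have h1 := hn hs
      simp only [Set.mem_setOf_eq, Matrix.mulVec_smul, reIP_smul_l, reIP_smul_r] at h1
      have h2 : 0 < reIP ((cmap M).mulVec z) z + n * reIP ((cmap L).mulVec z) z := by
        have h3 : 0 < (‖z‖⁻¹ * ‖z‖⁻¹) *
            (reIP ((cmap M).mulVec z) z + n * reIP ((cmap L).mulVec z) z) := by linarith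
        exact pos_of_mul_pos_right h3 (by positivity)
      have hL := hLnn z
      rw [reIP_comb]
      have : 1 / ((n : ℝ) + 1) * reIP ((cmap M).mulVec z) z + reIP ((cmap L).mulVec z) z
          = (reIP ((cmap M).mulVec z) z + n * reIP ((cmap L).mulVec z) z
            + reIP ((cmap L).mulVec z) z) / ((n : ℝ) + 1) := by
        field_simp; ring
      rw [this]
      positivity
    · intro z hz
      have hz0 : z ≠ 0 := by
        rintro rfl
        simp at hz
      rw [Set.mem_iUnion]
      rcases (hLnn z).eq_or_lt with h0 | h0
      · refine ⟨0, ?_⟩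
        have := h z (ker_of_zero L hLsym hLnn z h0.symm) hz0
        simpa using this
      · obtain ⟨n, hn⟩ := exists_nat_gt (-reIP ((cmap M).mulVec z) z / reIP ((cmap L).mulVec z) z)
        refine ⟨n, ?_⟩
        rw [div_lt_iff₀ h0] at hn
        simp only [Set.mem_setOf_eq]
        linarith
    · refine directed_of_isDirected_le fun a b hab z hz => ?_
      have : (a : ℝ) ≤ b := by exact_mod_cast hab
      have := mul_le_mul_of_nonneg_right this (hLnn z)
      simp only [Set.mem_setOf_eq] at hz ⊢
      linarith
  · rintro ⟨a, ha, h⟩ z hz hz0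
    have h1 := h z hz0
    have h2 : (cmap L).mulVec z = 0 := hz
    rw [reIP_comb, h2] at h1
    have h3 : reIP (0 : Fin m → ℂ) z = 0 := by simp [reIP]
    rw [h3, add_zero] at h1
    exact pos_of_mul_pos_right h1 ha.le
end
end
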